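/- arXiv:2103.14809 — 2 statements merged into one kernel-verified Lean document; each statement's English description precedes it below -/
import Mathlib

section
/- Let R be a φ-ring. Then R is a φ-IF ring if and only if R/Nil(R) is a field. -/
open CategoryTheory

universe u

/-- A commutative ring is a `φ`-ring if its nilradical is a divided prime ideal. -/
def IsPhiRing (R : Type u) [CommRing R] : Prop :=
  (nilradical R).IsPrime ∧ ∀ x : R, x ∉ nilradical R → nilradical R ≤ Ideal.span {x}

/-- A ring is nonnil-coherent if every finitely generated nonnil ideal is
finitely presented as a module. -/
def IsNonnilCoherent (R : Type u) [CommRing R] : Prop :=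
  ∀ I : Ideal R, I.FG → ¬ I ≤ nilradical R → Module.FinitePresentation R I

/-- A module is φ-torsion if every element is annihilated by a nonnil ideal. -/
def IsPhiTorsion (R : Type u) [CommRing R] (T : Type u) [AddCommGroup T] [Module R T] : Prop :=
  ∀ t : T, ∃ I : Ideal R, ¬ I ≤ nilradical R ∧ ∀ a ∈ I, a • t = 0

/-- A module `M` is φ-flat if `Tor₁ᴿ(T, M) = 0` for every φ-torsion module `T`. -/
def IsPhiFlat (R : Type u) [CommRing R] (M : Type u) [AddCommGroup M] [Module R M] : Prop :=
  ∀ (T : Type u) [AddCommGroup T] [Module R T], IsPhiTorsion R T →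
    Subsingleton (((Tor (ModuleCat.{u} R) 1).obj (ModuleCat.of R T)).obj (ModuleCat.of R M))

/-- A module `M` is nonnil-injective if `Ext¹ᴿ(T, M) = 0` for every φ-torsion module `T`. -/
def IsNonnilInjective (R : Type u) [CommRing R] (M : Type u) [AddCommGroup M] [Module R M] :
    Prop :=
  ∀ (T : Type u) [AddCommGroup T] [Module R T], IsPhiTorsion R T →
    Subsingleton (((Ext R (ModuleCat.{u} R) 1).obj (Opposite.op (ModuleCat.of R T))).obj
      (ModuleCat.of R M))

/-- A module `M` is nonnil-FP-injective if `Ext¹ᴿ(T, M) = 0` for every finitely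
presented φ-torsion module `T`. -/
def IsNonnilFPInjective (R : Type u) [CommRing R] (M : Type u) [AddCommGroup M] [Module R M] :
    Prop :=
  ∀ (T : Type u) [AddCommGroup T] [Module R T], Module.FinitePresentation R T →
    IsPhiTorsion R T →
    Subsingleton (((Ext R (ModuleCat.{u} R) 1).obj (Opposite.op (ModuleCat.of R T))).obj
      (ModuleCat.of R M))

open scoped TensorProduct

lemma ext_of_ker_le {A : Type u} [CommRing A] {X Y M : Type u} [AddCommGroup X] [Module A X]
    [AddCommGroup Y] [Module A Y] [AddCommGroup M] [Module A M] [Module.Injective A M]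
    (a : X →ₗ[A] Y) (f : X →ₗ[A] M) (h : LinearMap.ker a ≤ LinearMap.ker f) :
    ∃ g : Y →ₗ[A] M, ∀ x, g (a x) = f x := by
  obtain ⟨g, hg⟩ := Module.Injective.out ((LinearMap.ker a).liftQ a le_rfl)
    (by
      rw [← LinearMap.ker_eq_bot]
      exact Submodule.ker_liftQ_eq_bot _ _ _ le_rfl) ((LinearMap.ker a).liftQ f h)
  exact ⟨g, fun x => by simpa using hg (Submodule.Quotient.mk x)⟩

lemma phi_extend {R : Type u} [CommRing R] (hR : IsPhiRing R) {X Y T M : Type u}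
    [AddCommGroup X] [Module R X] [AddCommGroup Y] [Module R Y] [AddCommGroup T] [Module R T]
    [AddCommGroup M] [Module R M] [Module (R ⧸ nilradical R) M]
    [IsScalarTower R (R ⧸ nilradical R) M] [Module.Injective (R ⧸ nilradical R) M]
    (hT : IsPhiTorsion R T) (a : X →ₗ[R] Y) (b : Y →ₗ[R] T)
    (hab : ∀ y, b y = 0 → ∃ x, a x = y) (f : X →ₗ[R] M)
    (hf : ∀ x, a x = 0 → f x = 0) :
    ∃ g : Y →ₗ[R] M, ∀ x, g (a x) = f x := by
  have hM : ∀ n ∈ nilradical R, ∀ m : M, n • m = 0 := by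
    intro n hn m
    rw [← algebraMap_smul (R ⧸ nilradical R) n m, Ideal.Quotient.algebraMap_eq,
      Ideal.Quotient.eq_zero_iff_mem.2 hn, zero_smul]
  have hfN : ∀ x ∈ (nilradical R • ⊤ : Submodule R X), f x = 0 := by
    intro x hx
    refine Submodule.smul_induction_on hx ?_ ?_
    · intro n hn x _
      rw [map_smul, hM n hn]
    · intro x y hx hy
      rw [map_add, hx, hy, add_zero]
  have key : ∀ y ∈ (nilradical R • ⊤ : Submodule R Y),
      ∃ q ∈ (nilradical R • ⊤ : Submodule R X), a q = y := by
    intro y hy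
    refine Submodule.smul_induction_on hy ?_ ?_
    · intro n hn y _
      obtain ⟨I, hI, hIy⟩ := hT (b y)
      obtain ⟨s, hsI, hs⟩ := Set.not_subset.1 hI
      obtain ⟨r, hr⟩ := Ideal.mem_span_singleton'.1 (hR.2 s hs hn)
      have hrN : r ∈ nilradical R := by
        have := hR.1
        exact (this.mem_or_mem (hr ▸ hn)).resolve_right hs
      obtain ⟨q, hq⟩ := hab (s • y) (by rw [map_smul]; exact hIy s hsI)
      exact ⟨r • q, Submodule.smul_mem_smul hrN trivial, by rw [map_smul, hq, smul_smul, hr]⟩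
    · rintro _ _ ⟨q, hq, rfl⟩ ⟨q', hq', rfl⟩
      exact ⟨q + q', add_mem hq hq', map_add _ _ _⟩
  let a' : (X ⧸ (nilradical R • ⊤ : Submodule R X)) →ₗ[R]
      (Y ⧸ (nilradical R • ⊤ : Submodule R Y)) :=
    Submodule.mapQ _ _ a (by
      rw [← Submodule.map_le_iff_le_comap, Submodule.map_smul'']
      exact Submodule.smul_mono le_rfl le_top)
  let f' : (X ⧸ (nilradical R • ⊤ : Submodule R X)) →ₗ[R] M :=
    Submodule.liftQ _ f hfN
  have hs : Function.Surjective (algebraMap R (R ⧸ nilradical R)) := Ideal.Quotient.mk_surjective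
  obtain ⟨g, hg⟩ := ext_of_ker_le (LinearMap.extendScalarsOfSurjective hs a')
    (LinearMap.extendScalarsOfSurjective hs f') (by
      intro x hx
      obtain ⟨x, rfl⟩ := Submodule.Quotient.mk_surjective _ x
      have hx' : (Submodule.Quotient.mk (a x) : Y ⧸ (nilradical R • ⊤ : Submodule R Y)) = 0 := hx
      obtain ⟨q, hq, hqx⟩ := key _ ((Submodule.Quotient.mk_eq_zero _).1 hx')
      change f x = 0
      have := hf (x - q) (by rw [map_sub, hqx, sub_self])
      rwa [map_sub, hfN q hq, sub_zero] at this)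
  exact ⟨(g.restrictScalars R).comp (Submodule.mkQ _), fun x => hg (Submodule.Quotient.mk x)⟩

lemma nonnilInjective_of {R : Type u} [CommRing R] (hR : IsPhiRing R) (M : Type u)
    [AddCommGroup M] [Module R M] [Module (R ⧸ nilradical R) M]
    [IsScalarTower R (R ⧸ nilradical R) M] [Module.Injective (R ⧸ nilradical R) M] :
    IsNonnilInjective R M := by
  intro T _ _ hT
  apply ModuleCat.subsingleton_of_isZero
  let P := projectiveResolution (ModuleCat.of R T)
  refine Limits.IsZero.of_iso ?_ (P.isoExt 1 (ModuleCat.of R M))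
  rw [← HomologicalComplex.exactAt_iff_isZero_homology,
    HomologicalComplex.exactAt_iff' _ 0 1 2 (by simp) (by simp),
    ShortComplex.moduleCat_exact_iff]
  intro (f : P.complex.X 1 ⟶ ModuleCat.of R M) hf
  replace hf : P.complex.d 2 1 ≫ f = 0 := hf
  have e0 := (ShortComplex.moduleCat_exact_iff _).1 P.exact₀
  have e1 := (ShortComplex.moduleCat_exact_iff _).1 (P.exact_succ 0)
  obtain ⟨g, hg⟩ := phi_extend hR hT (P.complex.d 1 0).hom (P.π.f 0).hom e0 f.hom (by
    intro x hx
    obtain ⟨z, rfl⟩ := e1 x hx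
    exact ConcreteCategory.congr_hom hf z)
  refine ⟨(ModuleCat.ofHom g : P.complex.X 0 ⟶ ModuleCat.of R M), ?_⟩
  change P.complex.d 1 0 ≫ ModuleCat.ofHom g = f
  ext x
  exact hg x

lemma mk_tmul_surj {R : Type u} [CommRing R] (x : R) (N : Type u) [AddCommGroup N] [Module R N]
    (z : TensorProduct R (R ⧸ Ideal.span {x}) N) :
    ∃ n : N, z = (1 : R ⧸ Ideal.span {x}) ⊗ₜ[R] n := by
  obtain ⟨n, hn⟩ := TensorProduct.mk_surjective R N (R ⧸ Ideal.span {x})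
    Ideal.Quotient.mk_surjective z
  exact ⟨n, hn.symm⟩

lemma one_tmul_eq_zero {R : Type u} [CommRing R] (x : R) (N : Type u) [AddCommGroup N] [Module R N]
    (n : N) (h : (1 : R ⧸ Ideal.span {x}) ⊗ₜ[R] n = 0) : ∃ w : N, n = x • w := by
  have := congrArg (TensorProduct.quotTensorEquivQuotSMul N (Ideal.span {x})) h
  rw [map_zero] at this
  have h2 : (Submodule.Quotient.mk n : N ⧸ (Ideal.span {x} • ⊤ : Submodule R N)) = 0 := by
    rw [← this]
    have := TensorProduct.quotTensorEquivQuotSMul_mk_tmul (M := N) (Ideal.span {x}) 1 n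
    rw [one_smul] at this
    exact this.symm
  rw [Submodule.Quotient.mk_eq_zero, Submodule.ideal_span_singleton_smul] at h2
  obtain ⟨w, -, hw⟩ := h2
  exact ⟨w, hw.symm⟩

lemma proj_tors {R : Type u} [CommRing R] (x : R) (P M : Type u) [AddCommGroup P] [Module R P]
    [Module.Projective R P] [AddCommGroup M] [Module R M] (p : P →ₗ[R] M)
    (hM : ∀ r : R, r * x = 0 → ∀ m : M, r • m = 0) (u : P) (hu : x • u = 0) : p u = 0 := by
  obtain ⟨s, hs⟩ := Module.projective_def.1 (inferInstance : Module.Projective R P)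
  have h1 : u = Finsupp.linearCombination R id (s u) := (hs u).symm
  rw [h1, Finsupp.linearCombination_apply, Finsupp.sum, map_sum]
  refine Finset.sum_eq_zero fun i _ => ?_
  rw [map_smul]
  apply hM
  have h2 : x • s u = 0 := by rw [← map_smul, hu, map_zero]
  have h3 := DFunLike.congr_fun h2 i
  simpa [mul_comm] using h3

lemma smul_inj_of_tor {R : Type u} [CommRing R] (x : R) (M : Type u)
    [AddCommGroup M] [Module R M]
    (hM : ∀ r : R, r * x = 0 → ∀ m : M, r • m = 0)
    (h : Subsingleton (((Tor (ModuleCat.{u} R) 1).obj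
      (ModuleCat.of R (R ⧸ Ideal.span {x}))).obj (ModuleCat.of R M)))
    (m : M) (hm : x • m = 0) : m = 0 := by
  let P := projectiveResolution (ModuleCat.of R M)
  let F := (MonoidalCategory.tensoringLeft (ModuleCat.{u} R)).obj
    (ModuleCat.of R (R ⧸ Ideal.span {x}))
  have hz : Limits.IsZero (((F.mapHomologicalComplex _).obj P.complex).homology 1) :=
    Limits.IsZero.of_iso (@ModuleCat.isZero_of_subsingleton R _ _ h) (P.isoLeftDerivedObj F 1).symm
  rw [← HomologicalComplex.exactAt_iff_isZero_homology,
    HomologicalComplex.exactAt_iff' _ 2 1 0 (by simp) (by simp),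
    ShortComplex.moduleCat_exact_iff] at hz
  have e0 := (ShortComplex.moduleCat_exact_iff _).1 P.exact₀
  obtain ⟨p, rfl⟩ := (ModuleCat.epi_iff_surjective (P.π.f 0)).1 inferInstance m
  obtain ⟨q, hq⟩ := e0 (x • p) (by
    change (P.π.f 0).hom (x • p) = 0
    rw [map_smul]; exact hm)
  replace hq : (P.complex.d 1 0).hom q = x • p := hq
  obtain ⟨z, hz⟩ := hz ((1 : R ⧸ Ideal.span {x}) ⊗ₜ[R] q) (by
    change (1 : R ⧸ Ideal.span {x}) ⊗ₜ[R] ((P.complex.d 1 0).hom q) = 0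
    rw [hq, ← TensorProduct.smul_tmul]
    have : x • (1 : R ⧸ Ideal.span {x}) = 0 := by
      rw [Algebra.smul_def, mul_one]
      exact Ideal.Quotient.eq_zero_iff_mem.2 (Ideal.mem_span_singleton_self x)
    rw [this, TensorProduct.zero_tmul])
  obtain ⟨r, rfl⟩ := mk_tmul_surj x (P.complex.X 2) z
  replace hz : (1 : R ⧸ Ideal.span {x}) ⊗ₜ[R] ((P.complex.d 2 1).hom r) =
    (1 : R ⧸ Ideal.span {x}) ⊗ₜ[R] q := hz
  obtain ⟨w, hw⟩ := one_tmul_eq_zero x (P.complex.X 1) (q - (P.complex.d 2 1).hom r) (by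
    rw [TensorProduct.tmul_sub, hz, sub_self])
  have hdd : (P.complex.d 1 0).hom ((P.complex.d 2 1).hom r) = 0 :=
    ConcreteCategory.congr_hom (P.complex.d_comp_d 2 1 0) r
  have hpd : (P.π.f 0).hom ((P.complex.d 1 0).hom w) = 0 :=
    ConcreteCategory.congr_hom P.complex_d_comp_π_f_zero w
  have hu : x • (p - (P.complex.d 1 0).hom w) = 0 := by
    rw [smul_sub, ← map_smul, ← hw, map_sub, hdd, hq, sub_zero, sub_self]
  have : Module.Projective R (P.complex.X 0) :=
    (IsProjective.iff_projective (P.complex.X 0)).2 (P.projective 0)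
  have h0 := proj_tors x (P.complex.X 0) M (P.π.f 0).hom hM _ hu
  have h1 : (P.π.f 0).hom (p - (P.complex.d 1 0).hom w) =
      (P.π.f 0).hom p - (P.π.f 0).hom ((P.complex.d 1 0).hom w) := map_sub (P.π.f 0).hom _ _
  rw [hpd, sub_zero] at h1
  exact h1.symm.trans h0

/-- A φ-ring `R` is a φ-IF ring if and only if `R/Nil(R)` is a
field. -/
theorem phiIF_iff_quotient_nilradical_isField (R : Type u) [CommRing R]
    (hR : IsPhiRing R) :
    (∀ (M : Type u) [AddCommGroup M] [Module R M],
        IsNonnilInjective R M → IsPhiFlat R M) ↔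
      IsField (R ⧸ nilradical R) := by
  have hprime := hR.1
  constructor
  · intro H
    refine ⟨⟨0, 1, zero_ne_one⟩, mul_comm, ?_⟩
    intro y hy
    obtain ⟨x, rfl⟩ := Ideal.Quotient.mk_surjective y
    have hx : x ∉ nilradical R := fun h => hy (Ideal.Quotient.eq_zero_iff_mem.2 h)
    let A := R ⧸ nilradical R
    let x' : A := Ideal.Quotient.mk _ x
    obtain ⟨⟨J, hJ, i, hi⟩⟩ := EnoughInjectives.presentation
      (ModuleCat.of A (A ⧸ Ideal.span {x'}))
    letI : Module R J := Module.compHom J (Ideal.Quotient.mk (nilradical R))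
    haveI : IsScalarTower R A J := ⟨fun r a j => by
      rw [Algebra.smul_def, mul_smul]; rfl⟩
    haveI : Module.Injective A J := Module.injective_module_of_injective_object A J
    have hNI : IsNonnilInjective R J := nonnilInjective_of hR J
    have htor := H J hNI (R ⧸ Ideal.span {x}) (by
      intro t
      refine ⟨Ideal.span {x}, fun h => hx (h (Ideal.mem_span_singleton_self x)), ?_⟩
      intro a ha
      obtain ⟨t, rfl⟩ := Ideal.Quotient.mk_surjective t
      change Ideal.Quotient.mk _ (a * t) = 0
      exact Ideal.Quotient.eq_zero_iff_mem.2 (Ideal.mul_mem_right _ _ ha))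
    have h0 := smul_inj_of_tor x J (by
      intro r hr m
      have hrN : r ∈ nilradical R :=
        (hprime.mem_or_mem (hr ▸ zero_mem _ : r * x ∈ nilradical R)).resolve_right hx
      change (Ideal.Quotient.mk (nilradical R) r) • m = 0
      rw [Ideal.Quotient.eq_zero_iff_mem.2 hrN, zero_smul]) htor
      (i.hom (1 : A ⧸ Ideal.span {x'})) (by
        change x' • i.hom (1 : A ⧸ Ideal.span {x'}) = 0
        rw [← map_smul]
        have : x' • (1 : A ⧸ Ideal.span {x'}) = 0 := by
          change Ideal.Quotient.mk (Ideal.span {x'}) (x' * 1) = 0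
          rw [mul_one]
          exact Ideal.Quotient.eq_zero_iff_mem.2 (Ideal.mem_span_singleton_self x')
        erw [this, map_zero])
    have hinj := (ModuleCat.mono_iff_injective i).1 hi
    have h1 : (1 : A ⧸ Ideal.span {x'}) = 0 := hinj (h0.trans (map_zero i.hom).symm)
    have h2 : (1 : A) ∈ Ideal.span {x'} := Ideal.Quotient.eq_zero_iff_mem.1 h1
    obtain ⟨b, hb⟩ := Ideal.mem_span_singleton'.1 h2
    exact ⟨b, by rw [mul_comm]; exact hb⟩
  · intro hF M _ _ _ T _ _ hT
    have hT0 : Subsingleton T := by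
      refine subsingleton_of_forall_eq 0 fun t => ?_
      obtain ⟨I, hI, hIt⟩ := hT t
      obtain ⟨s, hsI, hs⟩ := Set.not_subset.1 hI
      obtain ⟨b, hb⟩ := hF.mul_inv_cancel (a := Ideal.Quotient.mk (nilradical R) s)
        (fun h => hs (Ideal.Quotient.eq_zero_iff_mem.1 h))
      obtain ⟨b, rfl⟩ := Ideal.Quotient.mk_surjective b
      rw [← map_mul, ← map_one (Ideal.Quotient.mk (nilradical R)), Ideal.Quotient.eq] at hb
      have hu : IsUnit (s * b) := by
        have := (mem_nilradical.1 hb).isUnit_add_one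
        rwa [sub_add_cancel] at this
      have hu' : IsUnit s := isUnit_of_mul_isUnit_left hu
      exact (hu'.smul_eq_zero).1 (hIt s hsI)
    apply ModuleCat.subsingleton_of_isZero
    let P := projectiveResolution (ModuleCat.of R M)
    let F := (MonoidalCategory.tensoringLeft (ModuleCat.{u} R)).obj (ModuleCat.of R T)
    refine Limits.IsZero.of_iso ?_ (P.isoLeftDerivedObj F 1)
    refine (HomologicalComplex.exactAt_iff_isZero_homology _ _).1
      (HomologicalComplex.ExactAt.of_isZero ?_)
    have : Subsingleton (TensorProduct R T (P.complex.X 1)) := inferInstance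
    exact @ModuleCat.isZero_of_subsingleton R _ (ModuleCat.of R (TensorProduct R T (P.complex.X 1))) this
end

section
/- Let R be a φ-ring. Then R is a φ-IF ring if and only if R is nonnil-coherent and for every maximal ideal m of R the localization R_m is a φ-IF ring (i.e., R_m is a φ-ring and every nonnil-injective R_m-module is φ-flat over R_m). -/
open CategoryTheory

universe u

/-- A φ-IF ring: a φ-ring in which every nonnil-injective module is φ-flat. -/
def IsPhiIFRing (S : Type u) [CommRing S] : Prop :=
  IsPhiRing S ∧
    ∀ (M : Type u) [AddCommGroup M] [Module S M], IsNonnilInjective S M → IsPhiFlat S M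

open TensorProduct

def NB (R : Type u) [CommRing R] (M : Type u) [AddCommGroup M] [Module R M] : Prop :=
  ∀ I : Ideal R, ¬ I ≤ nilradical R → ∀ g : I →ₗ[R] M, ∃ n : M, ∀ i : I, g i = (i : R) • n

def NF (R : Type u) [CommRing R] (M : Type u) [AddCommGroup M] [Module R M] : Prop :=
  ∀ I : Ideal R, ¬ I ≤ nilradical R → Function.Injective (I.subtype.rTensor M)

section one

variable {R : Type u} [CommRing R] {M : Type u} [AddCommGroup M] [Module R M]

lemma lcomp_surj_iff (I : Ideal R) :
    Function.Surjective (LinearMap.lcomp R M I.subtype) ↔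
      ∀ g : I →ₗ[R] M, ∃ n : M, ∀ i : I, g i = (i : R) • n := by
  constructor
  · intro h g
    obtain ⟨k, rfl⟩ := h g
    refine ⟨k 1, fun i => ?_⟩
    rw [← map_smul]; simp
  · intro h g
    obtain ⟨n, hn⟩ := h g
    refine ⟨LinearMap.toSpanSingleton R M n, ?_⟩
    ext i
    simp [hn]

lemma NF_iff : NF R M ↔ NB R (CharacterModule M) := by
  unfold NF NB
  simp_rw [rTensor_injective_iff_lcomp_surjective, lcomp_surj_iff]

lemma NB.extend (h : NB R M) {L F : Type u} [AddCommGroup L] [Module R L] [AddCommGroup F]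
    [Module R F] (i : L →ₗ[R] F) (hi : Function.Injective i)
    (ht : ∀ x : F, ∃ I : Ideal R, ¬ I ≤ nilradical R ∧ ∀ a ∈ I, a • x ∈ LinearMap.range i)
    (f : L →ₗ[R] M) : ∃ k : F →ₗ[R] M, ∀ x, k (i x) = f x := by
  have : Fact (Function.Injective i) := ⟨hi⟩
  have htop : (Module.Baer.extensionOfMax i f).domain = ⊤ := by
    refine Submodule.eq_top_iff'.mpr fun y => ?_
    set E := Module.Baer.extensionOfMax i f with hE
    obtain ⟨I, hI, hIy⟩ := ht y
    obtain ⟨q, hq⟩ := h (Module.Baer.ExtensionOfMaxAdjoin.ideal i f y)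
      (fun hle => hI (le_trans (fun a ha => E.le (hIy a ha)) hle))
      (Module.Baer.ExtensionOfMaxAdjoin.idealTo i f y)
    have hq' : ∀ (r : R) (hr : r • y ∈ E.domain), E.toLinearPMap ⟨r • y, hr⟩ = r • q :=
      fun r hr => hq ⟨r, hr⟩
    have hz : ∀ c : R, c • y = 0 → c • q = 0 := by
      intro c hc
      rw [← hq' c (by rw [hc]; exact zero_mem _)]
      have : (⟨c • y, by rw [hc]; exact zero_mem _⟩ : E.domain) = 0 := Subtype.ext hc
      rw [this, LinearPMap.map_zero]
    let g := LinearPMap.mkSpanSingleton' (σ := RingHom.id R) y q hz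
    have hc : ∀ (a : E.domain) (b : g.domain), (a : F) = b → E.toLinearPMap a = g b := by
      rintro ⟨a, ha⟩ ⟨b, hb⟩ hab
      obtain ⟨r, rfl⟩ := Submodule.mem_span_singleton.1 hb
      obtain rfl : a = r • y := hab
      rw [hq' r ha]
      exact (LinearPMap.mkSpanSingleton'_apply y q hz r hb).symm
    let E' : Module.Baer.ExtensionOf i f :=
      { E.toLinearPMap.sup g hc with
        le := le_trans E.le (LinearPMap.left_le_sup _ _ hc).1
        is_extension := fun m => by
          rw [E.is_extension]
          exact (LinearPMap.left_le_sup _ _ hc).2 rfl }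
    have hEE' : E ≤ E' := LinearPMap.left_le_sup _ _ hc
    have h1 := Module.Baer.extensionOfMax_is_max i f E' hEE'
    rw [hE, ← h1]
    exact (LinearPMap.right_le_sup E.toLinearPMap g hc).1 (Submodule.mem_span_singleton_self y)
  refine ⟨(Module.Baer.extensionOfMax i f).toLinearPMap.toFun ∘ₗ
    (LinearEquiv.ofTop _ htop).symm.toLinearMap, fun x => ?_⟩
  exact ((Module.Baer.extensionOfMax i f).is_extension x).symm

/-- chase -/
lemma chase {L F T K P M : Type u} [AddCommGroup L] [Module R L] [AddCommGroup F] [Module R F]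
    [AddCommGroup T] [Module R T] [AddCommGroup K] [Module R K] [AddCommGroup P] [Module R P]
    [AddCommGroup M] [Module R M] [Module.Flat R P]
    (i : L →ₗ[R] F) (p : F →ₗ[R] T) (j : K →ₗ[R] P) (q : P →ₗ[R] M)
    (hi : Function.Injective i) (hip : Function.Exact i p) (hp : Function.Surjective p)
    (hjq : Function.Exact j q) (hq : Function.Surjective q)
    (H : Function.Injective (j.lTensor T)) : Function.Injective (i.rTensor M) := by
  rw [injective_iff_map_eq_zero]
  intro z hz
  obtain ⟨y, rfl⟩ := LinearMap.lTensor_surjective L hq z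
  have comm : ∀ {A A' B B' : Type u} [AddCommGroup A] [Module R A] [AddCommGroup A'] [Module R A']
      [AddCommGroup B] [Module R B] [AddCommGroup B'] [Module R B'] (f : A →ₗ[R] A')
      (g : B →ₗ[R] B') (w : A ⊗[R] B),
      f.rTensor B' (g.lTensor A w) = g.lTensor A' (f.rTensor B w) := by
    intros
    simp only [← LinearMap.comp_apply, LinearMap.rTensor_comp_lTensor,
      LinearMap.lTensor_comp_rTensor]
  rw [comm] at hz
  obtain ⟨k, hk⟩ := (lTensor_exact F hjq hq _).1 hz
  have h1 : p.rTensor K k = 0 := by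
    apply H
    rw [← comm, hk, map_zero]
    exact (rTensor_exact P hip hp _).2 ⟨y, rfl⟩
  obtain ⟨k', rfl⟩ := (rTensor_exact K hip hp _).1 h1
  rw [← comm] at hk
  have := Module.Flat.rTensor_preserves_injective_linearMap (M := P) i hi hk
  rw [← this]
  exact (lTensor_exact L hjq hq _).2 ⟨k', rfl⟩

lemma NF.general (h : NF R M) {L F : Type u} [AddCommGroup L] [Module R L] [AddCommGroup F]
    [Module R F] (i : L →ₗ[R] F) (hi : Function.Injective i)
    (ht : ∀ x : F, ∃ I : Ideal R, ¬ I ≤ nilradical R ∧ ∀ a ∈ I, a • x ∈ LinearMap.range i) :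
    Function.Injective (i.rTensor M) := by
  rw [rTensor_injective_iff_lcomp_surjective]
  intro f
  obtain ⟨k, hk⟩ := (NF_iff.1 h).extend i hi ht f
  exact ⟨k, LinearMap.ext hk⟩

lemma tor_inj_of_NF (h : NF R M) {T K P : Type u} [AddCommGroup T] [Module R T]
    [AddCommGroup K] [Module R K] [AddCommGroup P] [Module R P] (hT : IsPhiTorsion R T)
    (j : K →ₗ[R] P) (q : P →ₗ[R] M) (hj : Function.Injective j)
    (hjq : Function.Exact j q) (hq : Function.Surjective q) :
    Function.Injective (j.lTensor T) := by
  let p : (T →₀ R) →ₗ[R] T := Finsupp.linearCombination R id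
  have hp : Function.Surjective p := Finsupp.linearCombination_id_surjective R T
  have hex : Function.Exact (LinearMap.ker p).subtype p := LinearMap.exact_subtype_ker_map p
  have h1 : Function.Injective ((LinearMap.ker p).subtype.rTensor M) := by
    apply h.general _ (Submodule.injective_subtype _)
    intro x
    obtain ⟨I, hI, hIx⟩ := hT (p x)
    refine ⟨I, hI, fun a ha => ?_⟩
    simp only [Submodule.range_subtype, LinearMap.mem_ker, map_smul]
    exact hIx a ha
  rw [LinearMap.lTensor_inj_iff_rTensor_inj]
  refine chase (K := LinearMap.ker p) (P := T →₀ R) j q (LinearMap.ker p).subtype p hj hjq hq ?_ hp ?_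
  · exact hex
  rwa [LinearMap.lTensor_inj_iff_rTensor_inj]

lemma isPhiTorsion_quot (I : Ideal R) (hI : ¬ I ≤ nilradical R) : IsPhiTorsion R (R ⧸ I) := by
  intro t
  obtain ⟨t, rfl⟩ := Ideal.Quotient.mk_surjective t
  refine ⟨I, hI, fun a ha => ?_⟩
  rw [Algebra.smul_def]
  change Ideal.Quotient.mk I a * _ = 0
  rw [Ideal.Quotient.eq_zero_iff_mem.2 ha, zero_mul]

lemma NF_of_tor_inj {K P : Type u}
    [AddCommGroup K] [Module R K] [AddCommGroup P] [Module R P] [Module.Flat R P]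
    (j : K →ₗ[R] P) (q : P →ₗ[R] M)
    (hjq : Function.Exact j q) (hq : Function.Surjective q)
    (H : ∀ (T : Type u) [AddCommGroup T] [Module R T], IsPhiTorsion R T →
      Function.Injective (j.lTensor T)) : NF R M := by
  intro I hI
  exact chase I.subtype I.mkQ j q (Submodule.injective_subtype _)
    (LinearMap.exact_subtype_mkQ I) (Submodule.mkQ_surjective I) hjq hq
    (H _ (isPhiTorsion_quot I hI))

end one

section two

variable {R : Type u} [CommRing R]

lemma tor_iff {M : ModuleCat.{u} R} (P : ProjectiveResolution M) (T : ModuleCat.{u} R) :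
    Subsingleton (((Tor (ModuleCat.{u} R) 1).obj T).obj M) ↔
      Function.Exact ((P.complex.d 2 1).hom.lTensor T) ((P.complex.d 1 0).hom.lTensor T) := by
  rw [← ModuleCat.isZero_iff_subsingleton]
  have e := P.isoLeftDerivedObj ((MonoidalCategory.tensoringLeft (ModuleCat.{u} R)).obj T) 1
  refine (Iso.isZero_iff e).trans ?_
  refine (HomologicalComplex.exactAt_iff_isZero_homology _ _).symm.trans ?_
  rw [HomologicalComplex.exactAt_iff' _ 2 1 0 (by simp) (by simp)]
  rw [ShortComplex.ShortExact.moduleCat_exact_iff_function_exact]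
  rfl

lemma ext_iff {T : ModuleCat.{u} R} (P : ProjectiveResolution T) (M : ModuleCat.{u} R) :
    Subsingleton (((Ext R (ModuleCat.{u} R) 1).obj (Opposite.op T)).obj M) ↔
      ∀ f : P.complex.X 1 →ₗ[R] M, f ∘ₗ (P.complex.d 2 1).hom = 0 →
        ∃ g : P.complex.X 0 →ₗ[R] M, g ∘ₗ (P.complex.d 1 0).hom = f := by
  rw [← ModuleCat.isZero_iff_subsingleton]
  refine (Iso.isZero_iff (P.isoExt 1 M)).trans ?_
  refine (HomologicalComplex.exactAt_iff_isZero_homology _ _).symm.trans ?_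
  rw [HomologicalComplex.exactAt_iff' _ 0 1 2 (by simp) (by simp)]
  rw [ShortComplex.moduleCat_exact_iff]
  constructor
  · intro h f hf
    obtain ⟨g, hg⟩ := h (ModuleCat.ofHom f) (ModuleCat.hom_ext hf)
    exact ⟨g.hom, congrArg ModuleCat.Hom.hom hg⟩
  · intro h f hf
    obtain ⟨g, hg⟩ := h (ModuleCat.Hom.hom f) (congrArg ModuleCat.Hom.hom hf)
    exact ⟨ModuleCat.ofHom g, ModuleCat.hom_ext hg⟩

lemma res_exact {M : ModuleCat.{u} R} (P : ProjectiveResolution M) :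
    Function.Exact (P.complex.d 2 1).hom (P.complex.d 1 0).hom ∧
    ∃ q : P.complex.X 0 →ₗ[R] M, Function.Exact (P.complex.d 1 0).hom q ∧
      Function.Surjective q := by
  refine ⟨(ShortComplex.ShortExact.moduleCat_exact_iff_function_exact _).1 (P.exact_succ 0),
    (P.π.f 0).hom, (ShortComplex.ShortExact.moduleCat_exact_iff_function_exact _).1 P.exact₀, ?_⟩
  exact (ModuleCat.epi_iff_surjective (P.π.f 0)).1 inferInstance

end two

section three

variable {R : Type u} [CommRing R] {M : Type u} [AddCommGroup M] [Module R M]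

lemma exact_iff_inj {P2 P1 P0 T : Type u} [AddCommGroup P2] [Module R P2]
    [AddCommGroup P1] [Module R P1] [AddCommGroup P0] [Module R P0] [AddCommGroup T] [Module R T]
    (d2 : P2 →ₗ[R] P1) (d1 : P1 →ₗ[R] P0) (h : Function.Exact d2 d1) :
    Function.Exact (d2.lTensor T) (d1.lTensor T) ↔
      Function.Injective (((LinearMap.ker d1).liftQ d1 le_rfl).lTensor T) := by
  set j := (LinearMap.ker d1).liftQ d1 le_rfl with hj
  have hex : Function.Exact d2 (LinearMap.ker d1).mkQ := by
    intro x
    rw [← h x]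
    simp
  have hex' := lTensor_exact T hex (Submodule.mkQ_surjective _)
  have hcomp : ∀ z, d1.lTensor T z = j.lTensor T ((LinearMap.ker d1).mkQ.lTensor T z) := by
    intro z
    rw [← LinearMap.comp_apply, ← LinearMap.lTensor_comp, hj, Submodule.liftQ_mkQ]
  constructor
  · intro H
    rw [injective_iff_map_eq_zero]
    intro w hw
    obtain ⟨z, rfl⟩ := LinearMap.lTensor_surjective T (Submodule.mkQ_surjective _) w
    rw [← hcomp] at hw
    exact (hex' z).2 ((H z).1 hw)
  · intro H z
    rw [← hex' z, hcomp, map_eq_zero_iff _ H]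

lemma phiFlat_iff : IsPhiFlat R M ↔ NF R M := by
  let P := projectiveResolution (ModuleCat.of R M)
  obtain ⟨h1, q, hq, hqs⟩ := res_exact P
  let j := (LinearMap.ker (P.complex.d 1 0).hom).liftQ (P.complex.d 1 0).hom le_rfl
  have hj : Function.Injective j := LinearMap.ker_eq_bot.1 (Submodule.ker_liftQ_eq_bot' _ _ rfl)
  have hjq : Function.Exact j q := by
    rw [LinearMap.exact_iff] at hq ⊢
    rw [hq, Submodule.range_liftQ]
  have : Projective (P.complex.X 0) := P.projective 0
  have : Module.Projective R (P.complex.X 0) := inferInstance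
  have : Module.Flat R (P.complex.X 0) := inferInstance
  have key : ∀ (T : Type u) [AddCommGroup T] [Module R T],
      Subsingleton (((Tor (ModuleCat.{u} R) 1).obj (ModuleCat.of R T)).obj (ModuleCat.of R M)) ↔
      Function.Injective (j.lTensor T) :=
    fun T _ _ => (tor_iff P (ModuleCat.of R T)).trans (exact_iff_inj _ _ h1)
  constructor
  · intro H
    exact NF_of_tor_inj j q hjq hqs (fun T _ _ hT => (key T).1 (H T hT))
  · intro H T _ _ hT
    exact (key T).2 (tor_inj_of_NF H hT j q hj hjq hqs)

lemma nonnilInjective_iff : IsNonnilInjective R M ↔ NB R M := by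
  constructor
  · intro H I hI g
    let P := projectiveResolution (ModuleCat.of R (R ⧸ I))
    obtain ⟨h1, q, hq, hqs⟩ := res_exact P
    have : Projective (P.complex.X 0) := P.projective 0
    have : Module.Projective R (P.complex.X 0) := inferInstance
    have h := (ext_iff P (ModuleCat.of R M)).1 (H (R ⧸ I) (isPhiTorsion_quot I hI))
    obtain ⟨l, hl⟩ := Module.projective_lifting_property I.mkQ q (Submodule.mkQ_surjective I)
    have hl' : ∀ x, I.mkQ (l x) = q x := fun x => LinearMap.congr_fun hl x
    obtain ⟨p, hp⟩ := hqs (I.mkQ 1)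
    have hmem : ∀ y, l ((P.complex.d 1 0).hom y) ∈ I := by
      intro y
      rw [← Submodule.Quotient.mk_eq_zero I]
      exact (hl' _).trans ((hq _).2 ⟨y, rfl⟩)
    obtain ⟨G, hG⟩ := h (g ∘ₗ (l ∘ₗ (P.complex.d 1 0).hom).codRestrict I hmem) (by
      ext y
      have : (l ∘ₗ (P.complex.d 1 0).hom).codRestrict I hmem ((P.complex.d 2 1).hom y) = 0 := by
        apply Subtype.ext
        change l ((P.complex.d 1 0).hom ((P.complex.d 2 1).hom y)) = 0
        rw [(h1 _).2 ⟨y, rfl⟩, map_zero]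
      change g _ = 0
      rw [this, map_zero])
    have hmem' : l p - 1 ∈ I := by
      rw [← Submodule.Quotient.eq]
      exact (hl' p).trans hp
    refine ⟨G p - g ⟨l p - 1, hmem'⟩, fun i => ?_⟩
    have hip : q ((i : R) • p) = 0 := by
      rw [map_smul, hp, ← map_smul]
      exact (Submodule.Quotient.mk_eq_zero I).2 (by simp)
    obtain ⟨y, hy⟩ := (hq _).1 hip
    have h3 : G ((i : R) • p) = g ⟨l ((P.complex.d 1 0).hom y), hmem y⟩ := by
      rw [← hy]
      exact LinearMap.congr_fun hG y
    rw [smul_sub, ← map_smul, ← map_smul, h3, ← map_sub]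
    congr 1
    apply Subtype.ext
    simp only [Submodule.coe_sub, Submodule.coe_smul, hy, map_smul, smul_eq_mul]
    ring
  · intro H T _ _ hT
    let P := projectiveResolution (ModuleCat.of R T)
    obtain ⟨h1, q, hq, hqs⟩ := res_exact P
    rw [ext_iff P]
    intro f hf
    let j := (LinearMap.ker (P.complex.d 1 0).hom).liftQ (P.complex.d 1 0).hom le_rfl
    have hj : Function.Injective j := LinearMap.ker_eq_bot.1 (Submodule.ker_liftQ_eq_bot' _ _ rfl)
    have hle : LinearMap.ker (P.complex.d 1 0).hom ≤ LinearMap.ker f := by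
      intro x hx
      obtain ⟨y, rfl⟩ := (h1 x).1 hx
      exact LinearMap.congr_fun hf y
    obtain ⟨k, hk⟩ := NB.extend H j hj (fun x => by
      obtain ⟨I, hI, hIx⟩ := hT (q x)
      refine ⟨I, hI, fun a ha => ?_⟩
      have h4 : q (a • x) = 0 := by rw [map_smul]; exact hIx a ha
      obtain ⟨y, hy⟩ := (hq _).1 h4
      exact ⟨Submodule.Quotient.mk y, hy⟩) ((LinearMap.ker (P.complex.d 1 0).hom).liftQ f hle)
    exact ⟨k, LinearMap.ext fun y => hk (Submodule.Quotient.mk y)⟩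

/-- double dual -/
def bidual (R : Type u) [CommRing R] (M : Type u) [AddCommGroup M] [Module R M] :
    M →ₗ[R] CharacterModule (CharacterModule M) where
  toFun m :=
    { toFun := fun c => c m
      map_zero' := rfl
      map_add' := fun _ _ => rfl }
  map_add' a b := by
    ext c
    exact map_add c a b
  map_smul' r a := rfl

lemma bidual_pure (N : Type u) [AddCommGroup N] [Module R N] :
    Function.Injective ((bidual R M).lTensor N) := by
  rw [injective_iff_map_eq_zero]
  intro z hz
  apply CharacterModule.eq_zero_of_character_apply
  intro c
  let c' : N →ₗ[R] CharacterModule M := CharacterModule.curry c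
  let C : CharacterModule (N ⊗[R] CharacterModule (CharacterModule M)) :=
    CharacterModule.uncurry ((bidual R (CharacterModule M)) ∘ₗ c')
  have h : ∀ w : N ⊗[R] M, C ((bidual R M).lTensor N w) = c w := by
    intro w
    induction w with
    | zero => simp
    | add x y hx hy => rw [map_add, map_add, map_add, hx, hy]
    | tmul n m => rfl
  rw [← h, hz, map_zero]

lemma NF_of_bidual (h : NF R (CharacterModule (CharacterModule M))) : NF R M := by
  intro I hI
  have h1 := (h I hI).comp (bidual_pure (R := R) (M := M) I)
  have h2 : ∀ z : I ⊗[R] M, I.subtype.rTensor _ ((bidual R M).lTensor I z) =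
      (bidual R M).lTensor R (I.subtype.rTensor M z) := by
    intro z
    simp only [← LinearMap.comp_apply, LinearMap.rTensor_comp_lTensor,
      LinearMap.lTensor_comp_rTensor]
  intro a b hab
  apply h1
  simp only [Function.comp, h2, hab]

lemma NF_of_fg (h : ∀ I : Ideal R, I.FG → ¬ I ≤ nilradical R →
    Function.Injective (I.subtype.rTensor M)) : NF R M := by
  intro I hI
  rw [injective_iff_map_eq_zero]
  intro z hz
  obtain ⟨J, hJ, hz'⟩ := TensorProduct.exists_finite_submodule_left_of_setFinite
    {z} (Set.finite_singleton _)
  obtain ⟨w, rfl⟩ := hz' rfl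
  obtain ⟨x, hxI, hx⟩ := Set.not_subset.1 hI
  let J0 : Ideal R := Ideal.span {x} ⊔ J.map I.subtype
  have hJ0 : J0.FG := Submodule.FG.sup (Submodule.fg_span_singleton x)
    (Submodule.FG.map _ (Module.Finite.iff_fg.1 hJ))
  have hJ0' : ¬ J0 ≤ nilradical R := fun hle =>
    hx (hle ((le_sup_left : _ ≤ J0) (Ideal.mem_span_singleton_self x)))
  have hle : J0 ≤ I := by
    refine sup_le ?_ ?_
    · rw [Ideal.span_singleton_le_iff_mem]; exact hxI
    · rintro _ ⟨y, -, rfl⟩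
      exact y.2
  let ι : J →ₗ[R] J0 := (I.subtype ∘ₗ J.subtype).codRestrict J0
    (fun y => (le_sup_right : _ ≤ J0) ⟨y.1, y.2, rfl⟩)
  have e1 : J.subtype = Submodule.inclusion hle ∘ₗ ι := rfl
  have e2 : I.subtype ∘ₗ J.subtype = J0.subtype ∘ₗ ι := rfl
  have h0 : ι.rTensor M w = 0 := by
    apply h J0 hJ0 hJ0'
    rw [map_zero, ← LinearMap.comp_apply, ← LinearMap.rTensor_comp, ← e2, LinearMap.rTensor_comp]
    exact hz
  rw [e1, LinearMap.rTensor_comp, LinearMap.comp_apply, h0, map_zero]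

end three

section four

variable {R : Type u} [CommRing R]

lemma NB.pi {X : Type u} {M : Type u} [AddCommGroup M] [Module R M] (h : NB R M) :
    NB R (X → M) := by
  intro I hI g
  choose n hn using fun x => h I hI (LinearMap.proj x ∘ₗ g)
  exact ⟨n, fun i => funext fun x => hn x i⟩

lemma exists_gens (I : Ideal R) (hI : I.FG) : ∃ (n : ℕ) (a : Fin n → I),
    Submodule.span R (Set.range a) = ⊤ := by
  have : Module.Finite R I := Module.Finite.iff_fg.2 hI
  exact Module.Finite.exists_fin

lemma coherent_of (H : ∀ (M : Type u) [AddCommGroup M] [Module R M], NB R M → NF R M) :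
    IsNonnilCoherent R := by
  intro I hfg hI
  obtain ⟨n, a, ha⟩ := exists_gens I hfg
  let π : (Fin n → R) →ₗ[R] I := Fintype.linearCombination R a
  have hπ : Function.Surjective π := by
    rw [← LinearMap.range_eq_top, Fintype.range_linearCombination, ha]
  refine Module.finitePresentation_of_surjective π hπ ?_
  have h0 : NF R R := fun I _ =>
    Module.Flat.rTensor_preserves_injective_linearMap _ (Submodule.injective_subtype _)
  have h1 : NB R (CharacterModule (CharacterModule R)) := NF_iff.1 (H _ (NF_iff.1 h0))
  let K := LinearMap.ker π
  have h2 : NF R (K → CharacterModule (CharacterModule R)) := H _ h1.pi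
  let x : Fin n → (K → CharacterModule (CharacterModule R)) :=
    fun i k => bidual R R (k.1 i)
  have hx0 : ∑ i, (a i : R) • x i = 0 := by
    funext k
    rw [Finset.sum_apply]
    simp only [Pi.smul_apply, x, ← map_smul, ← map_sum, Pi.zero_apply]
    have : ∑ i, (a i : R) • k.1 i = 0 := by
      have h3 : π k.1 = 0 := k.2
      rw [Fintype.linearCombination_apply] at h3
      have h4 := congrArg I.subtype h3
      rw [map_sum, map_zero] at h4
      rw [← h4]
      exact Finset.sum_congr rfl fun i _ => mul_comm _ _
    rw [this, map_zero]
  have hx : ∑ i, a i ⊗ₜ[R] x i = 0 := by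
    apply h2 I hI
    rw [map_zero, map_sum]
    have : ∀ i, I.subtype.rTensor _ (a i ⊗ₜ[R] x i) = (1 : R) ⊗ₜ[R] ((a i : R) • x i) := by
      intro i
      rw [LinearMap.rTensor_tmul, ← TensorProduct.smul_tmul]
      simp
    rw [Finset.sum_congr rfl fun i _ => this i, ← TensorProduct.tmul_sum, hx0,
      TensorProduct.tmul_zero]
  obtain ⟨l, r, y, hy, hr⟩ := TensorProduct.vanishesTrivially_of_sum_tmul_eq_zero R ha hx
  let ρ : Fin l → (Fin n → R) := fun j i => r i j
  classical
  refine ⟨Finset.univ.image ρ, ?_⟩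
  rw [Finset.coe_image, Finset.coe_univ, Set.image_univ]
  apply le_antisymm
  · rw [Submodule.span_le]
    rintro _ ⟨j, rfl⟩
    change π (ρ j) = 0
    rw [Fintype.linearCombination_apply]
    exact hr j
  · intro k hk
    set S := Submodule.span R (Set.range ρ) with hS
    rw [← Submodule.Quotient.mk_eq_zero]
    have h5 : (bidual R R).lTensor _ ((S.mkQ k) ⊗ₜ[R] (1 : R)) = 0 := by
      rw [LinearMap.lTensor_tmul]
      have h6 : k = ∑ i, k i • (Pi.single i 1 : Fin n → R) := by
        ext i'
        simp [Finset.sum_apply, Pi.single_apply]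
      have h7 : ∀ i, k i • bidual R R 1 = ∑ j, r i j • y j ⟨k, hk⟩ := by
        intro i
        have := congrFun (hy i) ⟨k, hk⟩
        rw [Finset.sum_apply] at this
        rw [← map_smul, smul_eq_mul, mul_one]
        exact this
      have h8 : ∀ j, ∑ i, r i j • S.mkQ (Pi.single i 1 : Fin n → R) = 0 := by
        intro j
        simp only [← map_smul, ← map_sum]
        have : ∑ i, r i j • (Pi.single i 1 : Fin n → R) = ρ j := by
          ext i'
          simp [Finset.sum_apply, Pi.single_apply, ρ]
        rw [this]
        exact (Submodule.Quotient.mk_eq_zero S).2 (Submodule.subset_span ⟨j, rfl⟩)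
      conv_lhs => rw [h6]
      rw [map_sum, TensorProduct.sum_tmul]
      simp only [map_smul, TensorProduct.smul_tmul, h7, TensorProduct.tmul_sum]
      rw [Finset.sum_comm]
      apply Finset.sum_eq_zero
      intro j _
      simp only [← TensorProduct.smul_tmul]
      rw [← TensorProduct.sum_tmul, h8, TensorProduct.zero_tmul]
    have h9 := bidual_pure (R := R) (M := R) ((Fin n → R) ⧸ S) (h5.trans (map_zero _).symm)
    have h10 := congrArg (TensorProduct.rid R _) h9
    simpa using h10

lemma lemmaD {E : Type u} [AddCommGroup E] [Module R E] (J : Ideal R)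
    (hJ : Module.FinitePresentation R J)
    (hE : ∀ g : J →ₗ[R] E, ∃ n : E, ∀ i : J, g i = (i : R) • n) :
    Function.Injective (J.subtype.rTensor (CharacterModule E)) := by
  have hfg : J.FG := Module.Finite.iff_fg.1 inferInstance
  obtain ⟨n, a, ha⟩ := exists_gens J hfg
  let π : (Fin n → R) →ₗ[R] J := Fintype.linearCombination R a
  have hπ : Function.Surjective π := by
    rw [← LinearMap.range_eq_top, Fintype.range_linearCombination, ha]
  obtain ⟨k, ρ, hρ⟩ := Submodule.fg_iff_exists_fin_generating_family.1
    (Module.FinitePresentation.fg_ker π hπ)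
  rw [injective_iff_map_eq_zero]
  intro z hz
  have hz' : ∃ f : Fin n → CharacterModule E, z = ∑ i, a i ⊗ₜ[R] f i := by
    clear hz
    induction z with
    | zero => exact ⟨0, by simp⟩
    | add x y hx hy =>
      obtain ⟨f, rfl⟩ := hx
      obtain ⟨g, rfl⟩ := hy
      exact ⟨f + g, by simp [TensorProduct.tmul_add, Finset.sum_add_distrib]⟩
    | tmul m f =>
      obtain ⟨c, rfl⟩ := hπ m
      refine ⟨fun i => c i • f, ?_⟩
      rw [Fintype.linearCombination_apply, TensorProduct.sum_tmul]
      simp only [TensorProduct.smul_tmul]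
  obtain ⟨f, rfl⟩ := hz'
  have hf : ∑ i, (a i : R) • f i = 0 := by
    have := congrArg (TensorProduct.lid R _) hz
    simpa using this
  let T : (Fin n → E) →ₗ[ℤ] (Fin k → E) :=
    { toFun := fun e j => ∑ i, ρ j i • e i
      map_add' := fun e e' => by
        funext j
        simp [Finset.sum_add_distrib]
      map_smul' := fun c e => by
        funext j
        simp only [Pi.smul_apply, Finset.smul_sum, RingHom.id_apply]
        exact Finset.sum_congr rfl fun i _ => smul_comm _ _ _ }
  let F : (Fin n → E) →ₗ[ℤ] AddCircle (1 : ℚ) :=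
    ∑ i, (AddMonoidHom.toIntLinearMap (f i)) ∘ₗ LinearMap.proj i
  have hF : ∀ e, F e = ∑ i, f i (e i) := by
    intro e
    simp only [F, LinearMap.sum_apply]
    rfl
  have hle : LinearMap.ker T ≤ LinearMap.ker F := by
    intro e he
    have he' : ∀ j, ∑ i, ρ j i • e i = 0 := fun j => congrFun he j
    have hker : LinearMap.ker π ≤ LinearMap.ker (Fintype.linearCombination R e) := by
      rw [← hρ, Submodule.span_le]
      rintro _ ⟨j, rfl⟩
      change Fintype.linearCombination R e (ρ j) = 0
      rw [Fintype.linearCombination_apply]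
      exact he' j
    obtain ⟨m, hm⟩ := hE ((LinearMap.ker π).liftQ (Fintype.linearCombination R e) hker ∘ₗ
      (π.quotKerEquivOfSurjective hπ).symm.toLinearMap)
    have hm' : ∀ i, e i = (a i : R) • m := by
      intro i
      rw [← hm]
      have h1 : a i = π (Pi.single i 1) := by
        simp [π, Fintype.linearCombination_apply_single]
      have h2 : (π.quotKerEquivOfSurjective hπ).symm (a i) =
          Submodule.Quotient.mk (Pi.single i 1) := by
        rw [LinearEquiv.symm_apply_eq, h1]
        rfl
      rw [LinearMap.comp_apply]
      change _ = (LinearMap.ker π).liftQ _ hker ((π.quotKerEquivOfSurjective hπ).symm (a i))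
      rw [h2, Submodule.liftQ_apply, Fintype.linearCombination_apply_single, one_smul]
    change F e = 0
    rw [hF]
    have h3 := DFunLike.congr_fun hf m
    have h4 : (∑ i, (a i : R) • f i) m = ∑ i, ((a i : R) • f i) m :=
      map_sum (bidual R E m : CharacterModule E →+ AddCircle (1 : ℚ)) _ _
    rw [h4] at h3
    simp only [hm']
    exact h3
  obtain ⟨Y, hY⟩ := (Module.Baer.of_divisible (AddCircle (1 : ℚ))).extension_property
    ((LinearMap.ker T).liftQ T le_rfl)
    (LinearMap.ker_eq_bot.1 (Submodule.ker_liftQ_eq_bot' _ _ rfl))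
    ((LinearMap.ker T).liftQ F hle)
  have hY' : ∀ e, Y (T e) = F e := fun e => LinearMap.congr_fun hY (Submodule.Quotient.mk e)
  let y : Fin k → CharacterModule E := fun j => (Y ∘ₗ LinearMap.single ℤ _ j).toAddMonoidHom
  have hfy : ∀ i, f i = ∑ j, ρ j i • y j := by
    intro i
    apply CharacterModule.ext
    intro e
    have h4 : (∑ j, ρ j i • y j) e = ∑ j, (ρ j i • y j) e :=
      map_sum (bidual R E e : CharacterModule E →+ AddCircle (1 : ℚ)) _ _
    rw [h4]
    have h5 : f i e = F (Pi.single i e) := by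
      rw [hF, Finset.sum_eq_single i]
      · simp
      · intro b _ hb
        rw [Pi.single_eq_of_ne hb, map_zero]
      · simp
    have h6 : T (Pi.single i e) = ∑ j, Pi.single j (ρ j i • e) := by
      funext j'
      change ∑ i', ρ j' i' • (Pi.single i e : Fin n → E) i' = _
      rw [Finset.sum_apply, Finset.sum_eq_single i, Finset.sum_eq_single j']
      · simp
      · intro b _ hb
        rw [Pi.single_eq_of_ne hb.symm]
      · simp
      · intro b _ hb
        rw [Pi.single_eq_of_ne hb, smul_zero]
      · simp
    rw [h5, ← hY', h6, map_sum]
    rfl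
  simp only [hfy, TensorProduct.tmul_sum]
  rw [Finset.sum_comm]
  apply Finset.sum_eq_zero
  intro j _
  simp only [← TensorProduct.smul_tmul]
  rw [← TensorProduct.sum_tmul]
  have : ∑ i, ρ j i • a i = 0 := by
    have h1 : ρ j ∈ LinearMap.ker π := by rw [← hρ]; exact Submodule.subset_span ⟨j, rfl⟩
    rwa [LinearMap.mem_ker, Fintype.linearCombination_apply] at h1
  rw [this, TensorProduct.zero_tmul]

end four

section five

variable {R : Type u} [CommRing R] (hR : IsPhiRing R) (m : Ideal R) [m.IsPrime]

include hR in
lemma mem_nil_loc (x : R) : algebraMap R (Localization.AtPrime m) x ∈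
    nilradical (Localization.AtPrime m) ↔ x ∈ nilradical R := by
  constructor
  · intro h
    obtain ⟨n, hn⟩ := mem_nilradical.1 h
    rw [← map_pow, IsLocalization.map_eq_zero_iff m.primeCompl] at hn
    obtain ⟨c, hc⟩ := hn
    have h1 : (c : R) * x ^ n ∈ nilradical R := by rw [hc]; exact zero_mem _
    rcases hR.1.mem_or_mem h1 with h2 | h2
    · exact absurd (nilradical_le_prime m h2) c.2
    · exact hR.1.mem_of_pow_mem _ h2
  · intro h
    rw [mem_nilradical] at h ⊢
    exact h.map _

include hR in
lemma phiRing_loc : IsPhiRing (Localization.AtPrime m) := by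
  have key : ∀ z : Localization.AtPrime m, ∃ x : R, ∃ s : m.primeCompl,
      z * algebraMap R _ (s : R) = algebraMap R _ x := by
    intro z
    obtain ⟨⟨x, s⟩, h⟩ := IsLocalization.surj m.primeCompl z
    exact ⟨x, s, h⟩
  have hu : ∀ s : m.primeCompl, IsUnit (algebraMap R (Localization.AtPrime m) (s : R)) :=
    fun s => IsLocalization.map_units _ s
  have hmem : ∀ (z : Localization.AtPrime m) (x : R) (s : m.primeCompl),
      z * algebraMap R _ (s : R) = algebraMap R _ x →
      (z ∈ nilradical (Localization.AtPrime m) ↔ x ∈ nilradical R) := by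
    intro z x s h
    rw [← mem_nil_loc hR m, ← h, Ideal.mul_unit_mem_iff_mem _ (hu s)]
  refine ⟨⟨?_, ?_⟩, ?_⟩
  · rw [Ideal.ne_top_iff_one, ← map_one (algebraMap R _), mem_nil_loc hR,
      ← Ideal.ne_top_iff_one]
    exact hR.1.ne_top
  · intro z w hzw
    obtain ⟨x, s, hx⟩ := key z
    obtain ⟨y, t, hy⟩ := key w
    rw [hmem z x s hx, hmem w y t hy]
    have h3 : z * w * algebraMap R _ ((s * t : m.primeCompl) : R) = algebraMap R _ (x * y) := by
      rw [map_mul, ← hx, ← hy, Submonoid.coe_mul, map_mul]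
      ring
    exact hR.1.mem_or_mem ((hmem _ _ _ h3).1 hzw)
  · intro z hz w hw
    obtain ⟨x, s, hx⟩ := key z
    obtain ⟨y, t, hy⟩ := key w
    rw [hmem z x s hx] at hz
    rw [hmem w y t hy] at hw
    obtain ⟨c, hc⟩ := Ideal.mem_span_singleton.1 (hR.2 x hz hw)
    rw [← Ideal.mul_unit_mem_iff_mem _ (hu t), hy, hc, map_mul, ← hx, mul_assoc]
    exact Ideal.mul_mem_right _ _ (Ideal.mem_span_singleton_self z)

include hR in
lemma nonnil_map {I : Ideal R} (hI : ¬ I ≤ nilradical R) :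
    ¬ I.map (algebraMap R (Localization.AtPrime m)) ≤ nilradical (Localization.AtPrime m) := by
  intro h
  exact hI fun x hx => (mem_nil_loc hR m x).1 (h (Ideal.mem_map_of_mem _ hx))

lemma nonnil_of_map {I : Ideal R}
    (hI : ¬ I.map (algebraMap R (Localization.AtPrime m)) ≤ nilradical (Localization.AtPrime m)) :
    ¬ I ≤ nilradical R := by
  intro h
  apply hI
  rw [Ideal.map_le_iff_le_comap]
  intro x hx
  have := h hx
  rw [Ideal.mem_comap]
  rw [mem_nilradical] at this ⊢
  exact this.map _

section tower

variable {N : Type u} [AddCommGroup N] [Module R N] [Module (Localization.AtPrime m) N]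
  [IsScalarTower R (Localization.AtPrime m) N]

lemma cancel_loc (s : m.primeCompl) {x y : N} (h : (s : R) • x = (s : R) • y) : x = y := by
  have hu : IsUnit (algebraMap R (Localization.AtPrime m) (s : R)) := IsLocalization.map_units _ s
  rw [← algebraMap_smul (Localization.AtPrime m) (s : R) x,
    ← algebraMap_smul (Localization.AtPrime m) (s : R) y] at h
  exact (hu.smul_left_cancel).1 h

lemma units_end (s : m.primeCompl) : IsUnit (algebraMap R (Module.End R N) s) := by
  rw [Module.End.isUnit_iff]
  constructor
  · intro x y h
    exact cancel_loc m s h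
  · intro y
    have hu : IsUnit (algebraMap R (Localization.AtPrime m) (s : R)) :=
      IsLocalization.map_units _ s
    obtain ⟨u, hu⟩ := hu
    refine ⟨(↑u⁻¹ : Localization.AtPrime m) • y, ?_⟩
    rw [Module.algebraMap_end_apply, ← algebraMap_smul (Localization.AtPrime m) (s : R),
      ← hu, smul_smul, Units.mul_inv, one_smul]

lemma ext_map (I : Ideal R) (g : I.map (algebraMap R (Localization.AtPrime m))
      →ₗ[Localization.AtPrime m] N) (n : N)
    (h : ∀ i : I, g (Algebra.idealMap (Localization.AtPrime m) I i) = (i : R) • n) :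
    ∀ j : I.map (algebraMap R (Localization.AtPrime m)),
      g j = (j : Localization.AtPrime m) • n := by
  intro j
  obtain ⟨⟨i, s⟩, his⟩ := (IsLocalization.mem_map_algebraMap_iff m.primeCompl _).1 j.2
  apply cancel_loc m s
  have h1 : (s : R) • j = Algebra.idealMap (Localization.AtPrime m) I i := by
    apply Subtype.ext
    change (s : R) • (j : Localization.AtPrime m) = algebraMap R _ (i : R)
    rw [← his, Algebra.smul_def, mul_comm]
  have h2 : g ((s : R) • j) = (s : R) • g j := by
    rw [← algebraMap_smul (Localization.AtPrime m) (s : R) j, map_smul, algebraMap_smul]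
  rw [← h2, h1, h, ← algebraMap_smul (Localization.AtPrime m) (i : R) n, ← his,
    mul_comm, mul_smul, algebraMap_smul]

include hR in
lemma NB_loc_iff : NB R N ↔ NB (Localization.AtPrime m) N := by
  constructor
  · intro h J hJ g
    have hJ' : (J.comap (algebraMap R (Localization.AtPrime m))).map (algebraMap R _) = J :=
      IsLocalization.map_under m.primeCompl _ J
    generalize J.comap (algebraMap R (Localization.AtPrime m)) = I at hJ'
    subst hJ'
    obtain ⟨n, hn⟩ := h I (nonnil_of_map m hJ)
      (g.restrictScalars R ∘ₗ Algebra.idealMap (Localization.AtPrime m) I)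
    exact ⟨n, ext_map m I g n hn⟩
  · intro h I hI g
    let f := Algebra.idealMap (Localization.AtPrime m) I
    obtain ⟨n, hn⟩ := h _ (nonnil_map hR m hI)
      ((IsLocalizedModule.lift m.primeCompl f g (units_end m)).extendScalarsOfIsLocalization
        m.primeCompl (Localization.AtPrime m))
    refine ⟨n, fun i => ?_⟩
    have h1 := hn (f i)
    rw [LinearMap.extendScalarsOfIsLocalization_apply', IsLocalizedModule.lift_apply] at h1
    rw [h1]
    exact algebraMap_smul (Localization.AtPrime m) (i : R) n

instance tower_char : IsScalarTower R (Localization.AtPrime m) (CharacterModule N) := by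
  refine ⟨fun r s f => ?_⟩
  apply CharacterModule.ext
  intro x
  change f ((r • s) • x) = f (s • r • x)
  rw [Algebra.smul_def, mul_comm, mul_smul, algebraMap_smul]

include hR in
lemma NF_loc_iff : NF R N ↔ NF (Localization.AtPrime m) N := by
  rw [NF_iff, NF_iff, NB_loc_iff hR m]

end tower

lemma exists_fg_map (J : Ideal (Localization.AtPrime m)) (hJ : J.FG) :
    ∃ I : Ideal R, I.FG ∧ I.map (algebraMap R (Localization.AtPrime m)) = J := by
  classical
  obtain ⟨t, rfl⟩ := hJ
  let ν : Localization.AtPrime m → R := fun z => (IsLocalization.sec m.primeCompl z).1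
  refine ⟨Ideal.span (t.image ν : Finset R), ⟨_, rfl⟩, ?_⟩
  have hν : ∀ z, z * algebraMap R _ ((IsLocalization.sec m.primeCompl z).2 : R) =
      algebraMap R _ (ν z) := fun z => IsLocalization.sec_spec m.primeCompl z
  rw [Ideal.map_span]
  apply le_antisymm
  · rw [Ideal.span_le]
    rintro _ ⟨x, hx, rfl⟩
    obtain ⟨z, hz, rfl⟩ := Finset.mem_image.1 hx
    rw [← hν]
    exact Ideal.mul_mem_right _ _ (Ideal.subset_span hz)
  · apply Ideal.span_le.2
    intro z hz
    have hu : IsUnit (algebraMap R (Localization.AtPrime m)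
      ((IsLocalization.sec m.primeCompl z).2 : R)) := IsLocalization.map_units _ _
    rw [SetLike.mem_coe, ← Ideal.mul_unit_mem_iff_mem _ hu, hν]
    exact Ideal.subset_span ⟨ν z, Finset.mem_image_of_mem ν hz, rfl⟩

lemma NF_of_local {E : Type u} [AddCommGroup E] [Module R E]
    (h : ∀ (m : Ideal R) [m.IsMaximal], NF R (LocalizedModule m.primeCompl E)) : NF R E := by
  intro I hI
  rw [injective_iff_map_eq_zero]
  intro z hz
  by_contra hne
  let A : Ideal R := LinearMap.ker (LinearMap.toSpanSingleton R _ z)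
  have hA : A ≠ ⊤ := by
    intro hA
    have h1 : (1 : R) ∈ A := by rw [hA]; trivial
    apply hne
    simpa [A] using h1
  obtain ⟨m, hm, hAm⟩ := Ideal.exists_le_maximal A hA
  let f := LocalizedModule.mkLinearMap m.primeCompl E
  have h1 : (f.lTensor I) z = 0 := by
    apply h m I hI
    rw [map_zero, ← LinearMap.comp_apply, LinearMap.rTensor_comp_lTensor,
      ← LinearMap.lTensor_comp_rTensor, LinearMap.comp_apply, hz, map_zero]
  have h2 : (TensorProduct.AlgebraTensorModule.rTensor R I f) (TensorProduct.comm R _ _ z) = 0 := by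
    have h3 : ∀ z : I ⊗[R] E, (TensorProduct.AlgebraTensorModule.rTensor R I f)
        (TensorProduct.comm R _ _ z) = TensorProduct.comm R _ _ ((f.lTensor I) z) := by
      intro z
      induction z with
      | zero => simp
      | add x y hx hy => rw [map_add, map_add, hx, hy, map_add, map_add]
      | tmul a b => rfl
    rw [h3, h1, map_zero]
  obtain ⟨s, hs⟩ := (IsLocalizedModule.eq_zero_iff m.primeCompl _).1 h2
  have h4 : (s : R) • z = 0 := by
    apply (TensorProduct.comm R I E).injective
    rw [map_smul, map_zero]
    exact hs
  exact s.2 (hAm h4)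

include hR in
lemma local_step (hc : IsNonnilCoherent R)
    (H : ∀ (M : Type u) [AddCommGroup M] [Module (Localization.AtPrime m) M],
      NB (Localization.AtPrime m) M → NF (Localization.AtPrime m) M)
    {E : Type u} [AddCommGroup E] [Module R E] (hE : NB R E) :
    NF R (LocalizedModule m.primeCompl E) := by
  rw [NF_loc_iff hR m]
  apply NF_of_bidual
  apply H
  rw [← NF_iff]
  apply NF_of_fg
  intro J hJ hJn
  apply lemmaD J (coherent_of H J hJ hJn)
  obtain ⟨I, hI, rfl⟩ := exists_fg_map m J hJ
  intro g
  have hIn := nonnil_of_map m hJn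
  have : Module.FinitePresentation R I := hc I hI hIn
  let f := LocalizedModule.mkLinearMap m.primeCompl E
  obtain ⟨h, s, hs⟩ := Module.FinitePresentation.exists_lift_of_isLocalizedModule m.primeCompl f
    (g.restrictScalars R ∘ₗ Algebra.idealMap (Localization.AtPrime m) I)
  obtain ⟨e, he⟩ := hE I hIn h
  refine ⟨LocalizedModule.mk e s, ext_map m I g _ fun i => ?_⟩
  apply cancel_loc m s
  have h1 : f (h i) = (s : R) • g (Algebra.idealMap (Localization.AtPrime m) I i) :=
    LinearMap.congr_fun hs i
  rw [← h1, he, map_smul, smul_comm]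
  congr 1
  rw [LocalizedModule.mkLinearMap_apply, LocalizedModule.smul'_mk]
  exact (LocalizedModule.mk_cancel s e).symm

end five

/-- A φ-ring `R` is a φ-IF ring if and only if `R` is nonnil-coherent
and the localization `R_m` is a φ-IF ring for every maximal ideal `m` of `R`. -/
theorem phiIF_iff_nonnilCoherent_and_localizations_phiIF (R : Type u) [CommRing R]
    (hR : IsPhiRing R) :
    (∀ (M : Type u) [AddCommGroup M] [Module R M],
        IsNonnilInjective R M → IsPhiFlat R M) ↔
      (IsNonnilCoherent R ∧
        ∀ (m : Ideal R) [m.IsMaximal], IsPhiIFRing (Localization.AtPrime m)) := by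
  simp only [nonnilInjective_iff, phiFlat_iff, IsPhiIFRing]
  constructor
  · intro H
    refine ⟨coherent_of H, fun m hm => ⟨phiRing_loc hR m, fun M _ _ hM => ?_⟩⟩
    letI : Module R M := Module.compHom M (algebraMap R (Localization.AtPrime m))
    haveI : IsScalarTower R (Localization.AtPrime m) M := ⟨fun r s x => by
      rw [Algebra.smul_def, mul_smul]
      rfl⟩
    exact (NF_loc_iff hR m).1 (H M ((NB_loc_iff hR m).2 hM))
  · rintro ⟨hc, hloc⟩ E _ _ hE
    exact NF_of_local fun m hm => local_step hR m hc (hloc m).2 hE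
end
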